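/- arXiv:2202.04534 — 4 statements merged into one kernel-verified Lean document; each statement's English description precedes it below -/
import Mathlib

section
/- For every α ∈ (0,1) and every ζ ∈ (0, α) there exists a constant C = C(α, ζ) > 0 such that for all 0 < s < t ≤ 1 and all x ∈ [-1,1]: ∫₀^s ∫_{-1}^1 |G(t−r, x−z)(t−r)^{α−1} − G(s−r, x−z)(s−r)^{α−1}| dz dr ≤ C (t − s)^ζ. -/
/-!
Write `G t y = (4πt)^(-1/2) * E t y` with `E t y = ∑ₙ exp (-(y + 2n)² / (4t))`. For fixed `y`,
`E` is increasing in `t`, while the prefactor `(4πt)^(-1/2) * t^(α-1)` is decreasing. With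
`u = s - r < v = t - r`, prefactors `b ≥ a` at `u` and `v`, this gives the pointwise bound
`|a E_v - b E_u| ≤ a (E_v - E_u) + (b - a) E_u`, whose integral over a period is explicit because
`∫ E t = √(4πt)` (unfolding the period onto the line). The result is
`v^(α-1) + u^(α-1) - 2 u^(1/2) v^(α-3/2) ≤ 2 u^(α-1) (1 - (u/v)^2) ≤ 4 u^(α-1) ((v-u)/u)^ζ`,
and integrating `u^(α-1-ζ)` over `(0, s)` produces at most `1 / (α - ζ)`.
-/

open MeasureTheory Real

/-- The heat kernel on the torus `𝕋 = [-1,1]` (period 2). -/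
noncomputable def G (t x : ℝ) : ℝ :=
  ∑' n : ℤ, (4 * Real.pi * t) ^ (-(1:ℝ)/2) * Real.exp (-(x + 2 * n) ^ 2 / (4 * t))

/-- The periodised Gaussian without its normalising prefactor. -/
noncomputable def E (t x : ℝ) : ℝ := ∑' n : ℤ, Real.exp (-(x + 2 * n) ^ 2 / (4 * t))

lemma G_eq (t x : ℝ) : G t x = (4 * Real.pi * t) ^ (-(1:ℝ)/2) * E t x := by
  unfold G E
  rw [tsum_mul_left]

lemma summable_E {t : ℝ} (ht : 0 < t) (x : ℝ) :
    Summable (fun n : ℤ => Real.exp (-(x + 2 * n) ^ 2 / (4 * t))) := by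
  have hT : 0 < 1 / (2 * Real.pi * t) := by positivity
  have h := (summable_pow_mul_jacobiTheta₂_term_bound 0 hT 0).mul_left (Real.exp (x ^ 2 / (4 * t)))
  refine Summable.of_nonneg_of_le (fun n => (Real.exp_pos _).le) (fun n => ?_) h
  have e : -Real.pi * (1 / (2 * Real.pi * t) * (n:ℝ) ^ 2 - 2 * 0 * |(n:ℝ)|)
      = -((n:ℝ) ^ 2 / (2 * t)) := by
    field_simp
    ring
  push_cast
  rw [e, pow_zero, one_mul, ← Real.exp_add]
  apply Real.exp_le_exp.mpr
  have : x ^ 2 / (4 * t) + -((n:ℝ) ^ 2 / (2 * t)) - -(x + 2 * n) ^ 2 / (4 * t)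
      = 2 * (x + n) ^ 2 / (4 * t) := by
    field_simp
    ring
  have h2 : 0 ≤ 2 * (x + n) ^ 2 / (4 * t) := by positivity
  linarith

lemma E_nonneg (t x : ℝ) : 0 ≤ E t x := tsum_nonneg fun _ => (Real.exp_pos _).le

lemma E_mono {u v : ℝ} (hu : 0 < u) (huv : u ≤ v) (x : ℝ) : E u x ≤ E v x := by
  refine (summable_E hu x).tsum_le_tsum (fun n => ?_) (summable_E (hu.trans_le huv) x)
  apply Real.exp_le_exp.mpr
  rw [neg_div, neg_div]
  gcongr

/-- Unfolding: the translates of a period tile the line, so the periods contribute the full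
Gaussian integral. -/
lemma hasSum_period {t : ℝ} (ht : 0 < t) (x : ℝ) :
    HasSum (fun n : ℤ => ∫ z in (-1:ℝ)..1, Real.exp (-(x - z + 2 * n) ^ 2 / (4 * t)))
      (√(4 * Real.pi * t)) := by
  have hb : 0 < t⁻¹ := inv_pos.mpr ht
  have h := ((integrable_exp_neg_mul_sq hb).hasSum_intervalIntegral ((x - 1) / 2)).mul_left 2
  have h4 : 2 * (∫ w : ℝ, Real.exp (-t⁻¹ * w ^ 2)) = √(4 * Real.pi * t) := by
    rw [integral_gaussian, div_inv_eq_mul,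
      show 4 * Real.pi * t = 2 ^ 2 * (Real.pi * t) by ring,
      Real.sqrt_mul (by norm_num : (0:ℝ) ≤ 2 ^ 2), Real.sqrt_sq (by norm_num)]
  rw [h4] at h
  refine (congrArg (fun f => HasSum f _) (funext fun n => ?_)).mpr h
  have h1 : (∫ z in (-1:ℝ)..1, Real.exp (-(x - z + 2 * n) ^ 2 / (4 * t)))
      = ∫ z in (-1:ℝ)..1, (fun w : ℝ => Real.exp (-t⁻¹ * w ^ 2)) ((x / 2 + n) - z / 2) := by
    congr 1
    funext z
    congr 1
    field_simp
    ring
  rw [h1, intervalIntegral.integral_comp_sub_div (fun w : ℝ => Real.exp (-t⁻¹ * w ^ 2))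
    (by norm_num : (2:ℝ) ≠ 0), smul_eq_mul]
  congr 2 <;> ring

lemma integral_E {t : ℝ} (ht : 0 < t) (x : ℝ) :
    ∫ z in (-1:ℝ)..1, E t (x - z) = √(4 * Real.pi * t) := by
  have h := hasSum_period ht x
  have hle : (-1:ℝ) ≤ 1 := by norm_num
  simp only [intervalIntegral.integral_of_le hle] at h ⊢
  unfold E
  refine (hasSum_integral_of_summable_integral_norm (fun n => ?_) ?_).unique h
  · have : Continuous fun z : ℝ => Real.exp (-(x - z + 2 * n) ^ 2 / (4 * t)) := by fun_prop
    exact (this.intervalIntegrable (-1) 1).1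
  · simpa only [Real.norm_eq_abs, Real.abs_exp] using h.summable

lemma intervalIntegrable_E {t : ℝ} (ht : 0 < t) (x : ℝ) :
    IntervalIntegrable (fun z => E t (x - z)) volume (-1) 1 := by
  -- A non-integrable function has integral `0`, whereas this one has a positive integral.
  by_contra hn
  have h := integral_E ht x
  rw [intervalIntegral.integral_undef hn] at h
  have : 0 < √(4 * Real.pi * t) := by positivity
  linarith

/-- The elementary estimate `1 - q^(α-3/2) ≤ 2 (h/u)^ζ`, where `q = (u + h)/u`. It follows
from `q^(α-3/2) ≥ q^(-2) ≥ 1 - 2 y/(1+y)` and `y/(1+y) ≤ min 1 y ≤ y^ζ` for `y = h/u`. -/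
lemma one_sub_le {α ζ u h : ℝ} (hα : 0 < α) (hζ : 0 < ζ) (hζ1 : ζ < 1)
    (hu : 0 < u) (hh : 0 < h) :
    1 - ((u + h) / u) ^ (α - 3 / 2) ≤ 2 * (h / u) ^ ζ := by
  have hq : 1 ≤ (u + h) / u := by rw [le_div_iff₀ hu]; linarith
  have hy : 0 < h / u := by positivity
  have h1 : ((u + h) / u) ^ (-2 : ℝ) ≤ ((u + h) / u) ^ (α - 3 / 2) :=
    Real.rpow_le_rpow_of_exponent_le hq (by linarith)
  have h2 : ((u + h) / u) ^ (-2 : ℝ) = ((1 + h / u)⁻¹) ^ 2 := by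
    rw [Real.rpow_neg (by positivity), Real.rpow_two, inv_pow]
    congr 2
    field_simp
  set y := h / u
  have h3 : y / (1 + y) ≤ y ^ ζ := by
    rw [div_le_iff₀ (by positivity)]
    rcases le_total y 1 with hy1 | hy1
    · have := Real.rpow_le_rpow_of_exponent_ge hy hy1 hζ1.le
      rw [Real.rpow_one] at this
      nlinarith
    · have := Real.one_le_rpow hy1 hζ.le
      nlinarith
  have h4 : (1 + y)⁻¹ = 1 - y / (1 + y) := by field_simp; ring
  rw [h2, h4] at h1
  nlinarith [sq_nonneg (y / (1 + y))]

/-- The `L¹` bound over a period for the weighted kernels at the times `u` and `u + h`. -/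
lemma inner_bound {α ζ u h : ℝ} (hα : α ∈ Set.Ioo (0:ℝ) 1) (hζ : ζ ∈ Set.Ioo (0:ℝ) α)
    (hu : 0 < u) (hh : 0 < h) (x : ℝ) :
    (∫ z in (-1:ℝ)..1, |G (u + h) (x - z) * (u + h) ^ (α - 1) - G u (x - z) * u ^ (α - 1)|)
      ≤ 4 * h ^ ζ * u ^ (α - ζ - 1) := by
  obtain ⟨hα0, hα1⟩ := hα
  obtain ⟨hζ0, hζ1⟩ := hζ
  have hv : 0 < u + h := by positivity
  have huv : u ≤ u + h := by linarith
  set v := u + h with hvdef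
  set a := (4 * Real.pi * v) ^ (-(1:ℝ)/2) * v ^ (α - 1) with ha
  set b := (4 * Real.pi * u) ^ (-(1:ℝ)/2) * u ^ (α - 1) with hb
  have ha0 : 0 ≤ a := by positivity
  have hab : a ≤ b := by
    apply mul_le_mul _ _ (by positivity) (by positivity)
    · exact Real.rpow_le_rpow_of_nonpos (by positivity) (by gcongr) (by norm_num)
    · exact Real.rpow_le_rpow_of_nonpos hu huv (by linarith)
  have hIu := intervalIntegrable_E hu x
  have hIv := intervalIntegrable_E hv x
  have hInt1 : IntervalIntegrable (fun z => a * (E v (x - z) - E u (x - z))) volume (-1) 1 :=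
    (hIv.sub hIu).const_mul a
  have hInt2 : IntervalIntegrable (fun z => (b - a) * E u (x - z)) volume (-1) 1 :=
    hIu.const_mul (b - a)
  have step1 : (∫ z in (-1:ℝ)..1, |G v (x - z) * v ^ (α - 1) - G u (x - z) * u ^ (α - 1)|)
      ≤ ∫ z in (-1:ℝ)..1, (a * (E v (x - z) - E u (x - z)) + (b - a) * E u (x - z)) := by
    have hle : (-1:ℝ) ≤ 1 := by norm_num
    rw [intervalIntegral.integral_of_le hle, intervalIntegral.integral_of_le hle]
    refine integral_mono_of_nonneg (Filter.Eventually.of_forall fun z => abs_nonneg _)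
      (hInt1.add hInt2).1 (Filter.Eventually.of_forall fun z => ?_)
    -- A difference of two nonnegative terms, since `E` increases and the prefactor decreases.
    have e : G v (x - z) * v ^ (α - 1) - G u (x - z) * u ^ (α - 1)
        = a * (E v (x - z) - E u (x - z)) - (b - a) * E u (x - z) := by
      rw [G_eq, G_eq, ha, hb]; ring
    have p1 : 0 ≤ a * (E v (x - z) - E u (x - z)) :=
      mul_nonneg ha0 (sub_nonneg.mpr (E_mono hu huv _))
    have p2 : 0 ≤ (b - a) * E u (x - z) := mul_nonneg (sub_nonneg.mpr hab) (E_nonneg _ _)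
    simp only [e]
    rw [abs_le]
    constructor <;> linarith
  refine step1.trans ?_
  rw [intervalIntegral.integral_add hInt1 hInt2, intervalIntegral.integral_const_mul,
    intervalIntegral.integral_const_mul, intervalIntegral.integral_sub hIv hIu,
    integral_E hu, integral_E hv]
  have inv_sqrt : ∀ w : ℝ, 0 < w → (4 * Real.pi * w) ^ (-(1:ℝ)/2) * √(4 * Real.pi * w) = 1 := by
    intro w hw
    rw [Real.sqrt_eq_rpow, ← Real.rpow_add (by positivity)]
    norm_num
  have av : a * √(4 * Real.pi * v) = v ^ (α - 1) := by
    rw [ha, mul_right_comm, inv_sqrt v hv, one_mul]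
  have bu : b * √(4 * Real.pi * u) = u ^ (α - 1) := by
    rw [hb, mul_right_comm, inv_sqrt u hu, one_mul]
  have au : a * √(4 * Real.pi * u) = u ^ (α - 1) * (v / u) ^ (α - 3 / 2) := by
    have hs : √(4 * Real.pi * u) = √(4 * Real.pi * v) * (v / u) ^ (-(1:ℝ)/2) := by
      rw [show 4 * Real.pi * u = (4 * Real.pi * v) * (v / u)⁻¹ by field_simp,
        Real.sqrt_mul (by positivity), Real.sqrt_eq_rpow (v / u)⁻¹,
        Real.inv_rpow (by positivity), ← Real.rpow_neg (by positivity), neg_div]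
    have hvu : v ^ (α - 1) = u ^ (α - 1) * (v / u) ^ (α - 1) := by
      rw [← Real.mul_rpow hu.le (by positivity), mul_div_cancel₀ _ hu.ne']
    rw [hs, ← mul_assoc, av, hvu, mul_assoc, ← Real.rpow_add (by positivity)]
    congr 2
    ring
  have hmono : v ^ (α - 1) ≤ u ^ (α - 1) :=
    Real.rpow_le_rpow_of_nonpos hu huv (by linarith)
  have hpow : u ^ (α - 1) * (h / u) ^ ζ = h ^ ζ * u ^ (α - ζ - 1) := by
    rw [Real.div_rpow hh.le hu.le, show α - ζ - 1 = (α - 1) - ζ by ring, Real.rpow_sub hu _ ζ]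
    exact mul_div_left_comm _ _ _
  have key := mul_le_mul_of_nonneg_left
    (one_sub_le hα0 hζ0 (hζ1.trans hα1) hu hh) (Real.rpow_nonneg hu.le (α - 1))
  calc a * (√(4 * Real.pi * v) - √(4 * Real.pi * u)) + (b - a) * √(4 * Real.pi * u)
      = v ^ (α - 1) + u ^ (α - 1) - 2 * (u ^ (α - 1) * (v / u) ^ (α - 3 / 2)) := by
        rw [← au, ← av, ← bu]; ring
    _ ≤ 2 * (u ^ (α - 1) * (1 - (v / u) ^ (α - 3 / 2))) := by linarith
    _ ≤ 2 * (u ^ (α - 1) * (2 * (h / u) ^ ζ)) := by linarith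
    _ = 4 * (u ^ (α - 1) * (h / u) ^ ζ) := by ring
    _ = 4 * h ^ ζ * u ^ (α - ζ - 1) := by rw [hpow]; ring

theorem stmt_1 (α ζ : ℝ) (hα : α ∈ Set.Ioo (0:ℝ) 1) (hζ : ζ ∈ Set.Ioo (0:ℝ) α) :
    ∃ C : ℝ, 0 < C ∧ ∀ s t : ℝ, 0 < s → s < t → t ≤ 1 →
      ∀ x ∈ Set.Icc (-1:ℝ) 1,
        (∫ r in (0:ℝ)..s, ∫ z in (-1:ℝ)..1,
            |G (t - r) (x - z) * (t - r) ^ (α - 1) - G (s - r) (x - z) * (s - r) ^ (α - 1)|)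
          ≤ C * (t - s) ^ ζ := by
  have hd : 0 < α - ζ := sub_pos.mpr hζ.2
  refine ⟨4 / (α - ζ), by positivity, fun s t hs hst ht x _ => ?_⟩
  have hh : 0 < t - s := sub_pos.mpr hst
  have hInt : IntervalIntegrable (fun r => 4 * (t - s) ^ ζ * (s - r) ^ (α - ζ - 1)) volume 0 s := by
    have h := (intervalIntegral.intervalIntegrable_rpow' (a := 0) (b := s)
      (show -1 < α - ζ - 1 by linarith)).comp_sub_left s
    simp only [sub_zero, sub_self] at h
    exact h.symm.const_mul _
  have hval : (∫ r in (0:ℝ)..s, 4 * (t - s) ^ ζ * (s - r) ^ (α - ζ - 1))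
      = 4 * (t - s) ^ ζ * (s ^ (α - ζ) / (α - ζ)) := by
    rw [intervalIntegral.integral_const_mul,
      intervalIntegral.integral_comp_sub_left (fun r => r ^ (α - ζ - 1)) s, sub_self, sub_zero,
      integral_rpow (Or.inl (by linarith)), sub_add_cancel, Real.zero_rpow hd.ne', sub_zero]
  have hs1 : s ^ (α - ζ) ≤ 1 := Real.rpow_le_one hs.le (by linarith) hd.le
  calc _ ≤ ∫ r in (0:ℝ)..s, 4 * (t - s) ^ ζ * (s - r) ^ (α - ζ - 1) := by
        -- Only the majorant has to be integrable; dropping the endpoint `r = s` keeps `s - r > 0`.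
        have hI := hInt.1
        rw [intervalIntegral.integral_of_le hs.le, intervalIntegral.integral_of_le hs.le,
          integral_Ioc_eq_integral_Ioo, integral_Ioc_eq_integral_Ioo]
        refine integral_mono_of_nonneg (Filter.Eventually.of_forall fun r =>
          intervalIntegral.integral_nonneg (by norm_num) fun _ _ => abs_nonneg _)
          (hI.mono_set Set.Ioo_subset_Ioc_self) ?_
        refine (ae_restrict_mem measurableSet_Ioo).mono fun r hr => ?_
        have := inner_bound hα hζ (sub_pos.mpr hr.2) hh x
        rwa [show s - r + (t - s) = t - r by ring] at this
    _ = 4 * (t - s) ^ ζ * (s ^ (α - ζ) / (α - ζ)) := hval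
    _ ≤ 4 * (t - s) ^ ζ * (1 / (α - ζ)) := by gcongr
    _ = 4 / (α - ζ) * (t - s) ^ ζ := by ring
end

section
/- For every t > 0 and all x, y ∈ ℝ: ∫_ℝ |exp(−(x−z)²/(4t)) − exp(−(y−z)²/(4t))| dz ≤ 2 |x − y|; in particular the bound is uniform in t. -/
/-!
For `x ≤ y` let `m = (x + y) / 2`. The kernel centred at `x` dominates the one centred at `y` on
`(-∞, m]`, and is dominated by it on `(m, ∞)`, so the sign of the difference is constant on each
half-line. On a half-line, the integral of the difference of two translates of `g` by `a ≤ b`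
telescopes to an integral of `g` over an interval of length `b - a`, hence is at most `b - a` when
`|g| ≤ 1` (`half_line_bound`). The right half-line reduces to the left one by reflection, since
the Gaussian is even. The two halves contribute `y - x` each.
-/

open MeasureTheory Real

lemma setIntegral_Iic_comp_sub_left (g : ℝ → ℝ) (a c : ℝ) :
    ∫ z in Set.Iic c, g (a - z) = ∫ w in Set.Ioi (a - c), g w := by
  have h := (Measure.measurePreserving_sub_left (volume : Measure ℝ) a).setIntegral_preimage_emb
    (MeasurableEquiv.subLeft a).measurableEmbedding g (Set.Ici (a - c))
  rw [Set.preimage_const_sub_Ici, sub_sub_cancel] at h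
  rw [h, integral_Ici_eq_integral_Ioi]

/-- The integral on the left telescopes to the integral of `g` over an interval of length `b - a`,
where `g` is at most `1`. -/
lemma half_line_bound {g : ℝ → ℝ} (hg : Integrable g) (hg1 : ∀ w, |g w| ≤ 1) {a b : ℝ}
    (hab : a ≤ b) (c : ℝ) : ∫ z in Set.Iic c, (g (a - z) - g (b - z)) ≤ b - a := by
  rw [integral_sub (hg.comp_sub_left a).integrableOn (hg.comp_sub_left b).integrableOn,
    setIntegral_Iic_comp_sub_left, setIntegral_Iic_comp_sub_left,
    intervalIntegral.integral_Ioi_sub_Ioi hg.integrableOn (by linarith)]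
  have h := intervalIntegral.norm_integral_le_of_norm_le_const (a := a - c) (b := b - c)
    (f := g) (C := 1) (fun w _ => hg1 w)
  rw [one_mul, sub_sub_sub_cancel_right, abs_of_nonneg (sub_nonneg.2 hab)] at h
  exact (le_abs_self _).trans h

theorem stmt_2 (t : ℝ) (ht : 0 < t) (x y : ℝ) :
    (∫ z : ℝ, |Real.exp (-(x - z) ^ 2 / (4 * t)) - Real.exp (-(y - z) ^ 2 / (4 * t))|)
      ≤ 2 * |x - y| := by
  wlog hxy : x ≤ y generalizing x y
  · have h := this y x (le_of_not_ge hxy)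
    rw [abs_sub_comm x y]
    simpa only [abs_sub_comm] using h
  set g : ℝ → ℝ := fun w => Real.exp (-w ^ 2 / (4 * t))
  have hg : Integrable g := by
    convert integrable_exp_neg_mul_sq (b := 1 / (4 * t)) (by positivity) using 2 with w
    simp only [g]
    ring_nf
  have hg1 : ∀ w, |g w| ≤ 1 := fun w => by
    rw [abs_of_pos (Real.exp_pos _), Real.exp_le_one_iff]
    exact div_nonpos_of_nonpos_of_nonneg (neg_nonpos.2 (sq_nonneg w)) (by positivity)
  have heven : ∀ w, g (-w) = g w := fun w => by simp [g]
  have hmono : ∀ u v : ℝ, u ^ 2 ≤ v ^ 2 → g v ≤ g u := fun u v huv => by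
    simp only [g]
    gcongr
  change ∫ z, |g (x - z) - g (y - z)| ≤ _
  have hint : Integrable fun z => |g (x - z) - g (y - z)| :=
    ((hg.comp_sub_left x).sub (hg.comp_sub_left y)).abs
  rw [← intervalIntegral.integral_Iic_add_Ioi (b := (x + y) / 2) hint.integrableOn
    hint.integrableOn]
  have h1 : ∫ z in Set.Iic ((x + y) / 2), |g (x - z) - g (y - z)| ≤ y - x := by
    rw [setIntegral_congr_fun (g := fun z => g (x - z) - g (y - z)) measurableSet_Iic]
    · exact half_line_bound hg hg1 hxy _
    · intro z hz
      rw [Set.mem_Iic] at hz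
      exact abs_of_nonneg (sub_nonneg.2 (hmono _ _ (by nlinarith)))
  have h2 : ∫ z in Set.Ioi ((x + y) / 2), |g (x - z) - g (y - z)| ≤ y - x := by
    rw [setIntegral_congr_fun (g := fun z => g (-y - -z) - g (-x - -z)) measurableSet_Ioi]
    · rw [integral_comp_neg_Ioi _ (fun w => g (-y - w) - g (-x - w))]
      exact (half_line_bound hg hg1 (neg_le_neg hxy) _).trans_eq (by ring)
    · intro z hz
      rw [Set.mem_Ioi] at hz
      have e : ∀ s : ℝ, g (-s - -z) = g (s - z) := fun s => by
        rw [← heven (s - z)]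
        congr 1
        ring
      simp only [e]
      rw [abs_sub_comm]
      exact abs_of_nonneg (sub_nonneg.2 (hmono _ _ (by nlinarith)))
  rw [abs_sub_comm, abs_of_nonneg (sub_nonneg.2 hxy)]
  linarith
end

section
/- For all real x, z, all times 0 ≤ r < s < t, and every ζ ∈ (0,1): |exp(−(x−z)²/(4(t−r))) − exp(−(x−z)²/(4(s−r)))| ≤ 2^ζ (t−s)^ζ (s−r)^{−ζ} exp(−ζ (x−z)²/(8(t−r))). -/
/-!
Write `a = s - r < b = t - r`, `A = (x - z)²` and `u = A / (4b)`. The difference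
`D = exp (-A/(4b)) - exp (-A/(4a))` lies in `[0, 1]`, so `D ≤ D ^ ζ`, and it is enough to bound `D`
by `2 (b - a) a⁻¹ exp (-u/2)` and raise this to the power `ζ`. Since `A/(4a) = u + u (b - a)/a`, the
inequality `1 - exp (-v) ≤ v` gives `D ≤ exp (-u) * u * (b - a)/a`, and `u exp (-u) ≤ 2 exp (-u/2)`
because `u/2 ≤ exp (u/2)`.
-/

/-- The endpoint `ζ = 1` of the interpolation. -/
lemma exp_sub_exp_le_endpoint {A a b : ℝ} (hA : 0 ≤ A) (ha : 0 < a) (hab : a < b) :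
    Real.exp (-A / (4 * b)) - Real.exp (-A / (4 * a))
      ≤ 2 * (b - a) * a⁻¹ * Real.exp (-A / (8 * b)) := by
  have hb : 0 < b := ha.trans hab
  obtain ⟨u, hu⟩ : ∃ u, u = A / (4 * b) := ⟨_, rfl⟩
  obtain ⟨q, hq⟩ : ∃ q, q = (b - a) * a⁻¹ := ⟨_, rfl⟩
  have hu0 : 0 ≤ u := by rw [hu]; positivity
  have hq0 : 0 ≤ q := by
    rw [hq]; exact mul_nonneg (sub_nonneg.2 hab.le) (inv_nonneg.2 ha.le)
  have e1 : -A / (4 * b) = -(u / 2) + -(u / 2) := by rw [hu]; ring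
  have e2 : -A / (4 * a) = (-(u / 2) + -(u / 2)) + -(u * q) := by
    rw [hu, hq]; field_simp; ring
  have e3 : -A / (8 * b) = -(u / 2) := by rw [hu]; ring
  have h1 : 1 - Real.exp (-(u * q)) ≤ u * q := by
    linarith [Real.add_one_le_exp (-(u * q))]
  have h2 : u * Real.exp (-(u / 2)) ≤ 2 := by
    have h := Real.add_one_le_exp (u / 2)
    rw [Real.exp_neg, ← div_eq_mul_inv, div_le_iff₀ (Real.exp_pos _)]
    linarith
  rw [e1, e2, e3, Real.exp_add (-(u / 2) + -(u / 2)), Real.exp_add (-(u / 2)), mul_assoc 2, ← hq]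
  have hE := Real.exp_pos (-(u / 2))
  set E := Real.exp (-(u / 2))
  calc E * E - E * E * Real.exp (-(u * q)) = E * E * (1 - Real.exp (-(u * q))) := by ring
    _ ≤ E * E * (u * q) := by gcongr
    _ = (u * E) * (q * E) := by ring
    _ ≤ 2 * (q * E) := by gcongr
    _ = 2 * q * E := by ring

theorem stmt_3 (x z r s t ζ : ℝ) (hr : 0 ≤ r) (hrs : r < s) (hst : s < t)
    (hζ : ζ ∈ Set.Ioo (0:ℝ) 1) :
    |Real.exp (-(x - z) ^ 2 / (4 * (t - r))) - Real.exp (-(x - z) ^ 2 / (4 * (s - r)))|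
      ≤ 2 ^ ζ * (t - s) ^ ζ * (s - r) ^ (-ζ) * Real.exp (-ζ * (x - z) ^ 2 / (8 * (t - r))) := by
  have ha : 0 < s - r := sub_pos.2 hrs
  have hb : 0 < t - r := by linarith
  have hts : 0 < t - s := sub_pos.2 hst
  have hA : 0 ≤ (x - z) ^ 2 := sq_nonneg _
  have h := exp_sub_exp_le_endpoint hA ha (b := t - r) (by linarith)
  rw [show t - r - (s - r) = t - s by ring] at h
  have hD0 : 0 ≤ Real.exp (-(x - z) ^ 2 / (4 * (t - r)))
      - Real.exp (-(x - z) ^ 2 / (4 * (s - r))) := by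
    rw [sub_nonneg, Real.exp_le_exp, neg_div, neg_div, neg_le_neg_iff]
    gcongr
  have hD1 : Real.exp (-(x - z) ^ 2 / (4 * (t - r)))
      - Real.exp (-(x - z) ^ 2 / (4 * (s - r))) ≤ 1 := by
    have h1 : Real.exp (-(x - z) ^ 2 / (4 * (t - r))) ≤ 1 := by
      rw [Real.exp_le_one_iff, neg_div, neg_nonpos]
      positivity
    linarith [Real.exp_pos (-(x - z) ^ 2 / (4 * (s - r)))]
  rw [abs_of_nonneg hD0]
  refine (Real.self_le_rpow_of_le_one hD0 hD1 hζ.2.le).trans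
    ((Real.rpow_le_rpow hD0 h hζ.1.le).trans_eq ?_)
  rw [Real.mul_rpow (by positivity) (by positivity), Real.mul_rpow (by positivity) (by positivity),
    Real.mul_rpow (by positivity) hts.le, Real.inv_rpow ha.le, ← Real.rpow_neg ha.le,
    ← Real.exp_mul]
  congr 2
  ring
end

section
/- For every α ∈ (0,1) and every ζ ∈ (0, α) there exists a constant C = C(α, ζ) > 0 such that for all 0 < s < t ≤ 1 and all x ∈ ℝ: ∫₀^s ∫_ℝ |exp(−(x−z)²/(4(t−r))) − exp(−(x−z)²/(4(s−r)))| (t−r)^{α−3/2} dz dr ≤ C (t − s)^ζ. -/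
open MeasureTheory Real

/-!
Write `a = t - r` and `b = s - r`, so `a - b = t - s =: h`. Since `b < a`, the wider Gaussian
dominates pointwise, the absolute value can be dropped, and the inner integral equals
`2√π (√a - √b) a^(α - 3/2)`. From `√a - √b = h / (√a + √b) ≤ h / √a` and
`h = h^ζ h^(1-ζ) ≤ h^ζ a^(1-ζ)` it is at most `2√π h^ζ a^(α - ζ - 1)`. As `ζ < α`, this power of
`a = t - r` is integrable in `r`, with integral at most `1 / (α - ζ)` because `t ≤ 1`.
-/

lemma integrable_heat (a x : ℝ) (ha : 0 < a) :
    Integrable (fun z : ℝ => Real.exp (-(x - z) ^ 2 / (4 * a))) := by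
  have h := (integrable_exp_neg_mul_sq (b := 1 / (4 * a)) (by positivity)).comp_sub_left x
  refine h.congr (Filter.Eventually.of_forall fun z => ?_)
  simp only
  congr 1
  ring

lemma integral_heat (a x : ℝ) (ha : 0 < a) :
    ∫ z : ℝ, Real.exp (-(x - z) ^ 2 / (4 * a)) = 2 * √π * √a := by
  have h := integral_sub_left_eq_self (fun y : ℝ => Real.exp (-(1 / (4 * a)) * y ^ 2)) volume x
  rw [integral_gaussian] at h
  have h2 : π / (1 / (4 * a)) = 2 ^ 2 * (π * a) := by field_simp; norm_num
  rw [h2, Real.sqrt_mul (by positivity), Real.sqrt_sq (by norm_num),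
    Real.sqrt_mul pi_pos.le] at h
  rw [mul_assoc, ← h]
  congr 1
  ext z
  congr 1
  ring

lemma integral_abs_heat_sub (a b x c : ℝ) (hb : 0 < b) (hab : b < a) :
    ∫ z : ℝ, |Real.exp (-(x - z) ^ 2 / (4 * a)) - Real.exp (-(x - z) ^ 2 / (4 * b))| * c
      = 2 * √π * (√a - √b) * c := by
  have ha := hb.trans hab
  have h : ∀ z : ℝ, |Real.exp (-(x - z) ^ 2 / (4 * a)) - Real.exp (-(x - z) ^ 2 / (4 * b))|
      = Real.exp (-(x - z) ^ 2 / (4 * a)) - Real.exp (-(x - z) ^ 2 / (4 * b)) := by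
    intro z
    rw [abs_of_nonneg]
    rw [sub_nonneg, Real.exp_le_exp, neg_div, neg_div, neg_le_neg_iff]
    gcongr
  simp_rw [h]
  rw [integral_mul_const, integral_sub (integrable_heat a x ha) (integrable_heat b x hb),
    integral_heat a x ha, integral_heat b x hb]
  ring

lemma sqrt_sub_mul_rpow_le (α ζ a b : ℝ) (hζ : ζ ≤ 1) (hb : 0 < b) (hab : b < a) :
    (√a - √b) * a ^ (α - 3/2) ≤ (a - b) ^ ζ * a ^ (α - ζ - 1) := by
  have ha := hb.trans hab
  have hh : 0 < a - b := sub_pos.2 hab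
  have h1 : (√a - √b) ≤ (a - b) * a ^ (-(1/2) : ℝ) := by
    rw [Real.rpow_neg ha.le, ← Real.sqrt_eq_rpow, ← div_eq_mul_inv, le_div_iff₀ (by positivity)]
    nlinarith [Real.sq_sqrt ha.le, Real.sq_sqrt hb.le, Real.sqrt_le_sqrt hab.le,
      Real.sqrt_nonneg b]
  have h2 : a - b ≤ (a - b) ^ ζ * a ^ (1 - ζ) := by
    calc a - b = (a - b) ^ ζ * (a - b) ^ (1 - ζ) := by
          rw [← Real.rpow_add hh]; simp
      _ ≤ _ := by
          gcongr
          · linarith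
  calc (√a - √b) * a ^ (α - 3/2)
      ≤ ((a - b) ^ ζ * a ^ (1 - ζ) * a ^ (-(1/2) : ℝ)) * a ^ (α - 3/2) := by
        gcongr
        exact h1.trans (by gcongr)
    _ = (a - b) ^ ζ * a ^ (α - ζ - 1) := by
        rw [mul_assoc, mul_assoc, ← Real.rpow_add ha, ← Real.rpow_add ha]
        congr 2
        ring

theorem stmt_5 (α ζ : ℝ) (hα : α ∈ Set.Ioo (0:ℝ) 1) (hζ : ζ ∈ Set.Ioo (0:ℝ) α) :
    ∃ C : ℝ, 0 < C ∧ ∀ s t : ℝ, 0 < s → s < t → t ≤ 1 → ∀ x : ℝ,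
      (∫ r in (0:ℝ)..s, ∫ z : ℝ,
          |Real.exp (-(x - z) ^ 2 / (4 * (t - r))) - Real.exp (-(x - z) ^ 2 / (4 * (s - r)))|
            * (t - r) ^ (α - 3/2))
        ≤ C * (t - s) ^ ζ := by
  obtain ⟨hα0, hα1⟩ := hα
  obtain ⟨hζ0, hζα⟩ := hζ
  have hδ : 0 < α - ζ := sub_pos.2 hζα
  refine ⟨2 * √π / (α - ζ), by positivity, fun s t hs hst ht x => ?_⟩
  have hts : 0 < t - s := sub_pos.2 hst
  have hint : IntervalIntegrable
      (fun r => 2 * √π * (t - s) ^ ζ * (t - r) ^ (α - ζ - 1)) volume 0 s := by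
    apply ContinuousOn.intervalIntegrable
    rw [Set.uIcc_of_le hs.le]
    refine continuousOn_const.mul (ContinuousOn.rpow_const (by fun_prop) fun r hr => Or.inl ?_)
    have := hr.2
    exact (by linarith : (0:ℝ) < t - r).ne'
  have hval : ∫ r in (0:ℝ)..s, (t - r) ^ (α - ζ - 1) ≤ 1 / (α - ζ) := by
    rw [intervalIntegral.integral_comp_sub_left (fun y : ℝ => y ^ (α - ζ - 1)),
      integral_rpow (Or.inl (by linarith)), sub_add_cancel, sub_zero]
    gcongr
    have h1 : t ^ (α - ζ) ≤ 1 := Real.rpow_le_one (by linarith) ht hδ.le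
    have h2 : 0 ≤ (t - s) ^ (α - ζ) := by positivity
    linarith
  calc _ ≤ ∫ r in (0:ℝ)..s, 2 * √π * (t - s) ^ ζ * (t - r) ^ (α - ζ - 1) := by
        rw [intervalIntegrable_iff_integrableOn_Ioo_of_le hs.le] at hint
        -- The endpoint `r = s`, where the variance `s - r` vanishes, is a null set.
        rw [intervalIntegral.integral_of_le hs.le, intervalIntegral.integral_of_le hs.le,
          integral_Ioc_eq_integral_Ioo, integral_Ioc_eq_integral_Ioo]
        refine integral_mono_of_nonneg ?_ hint ?_
        · refine ae_restrict_of_forall_mem measurableSet_Ioo fun r hr => ?_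
          have : 0 < t - r := by linarith [hr.2]
          exact integral_nonneg fun z => by positivity
        · refine ae_restrict_of_forall_mem measurableSet_Ioo fun r hr => ?_
          have hb : 0 < s - r := by linarith [hr.2]
          have hab : s - r < t - r := by linarith
          simp only
          rw [integral_abs_heat_sub _ _ _ _ hb hab, mul_assoc, mul_assoc (2 * √π)]
          have := sqrt_sub_mul_rpow_le α ζ _ _ (by linarith) hb hab
          rw [sub_sub_sub_cancel_right] at this
          gcongr
    _ = 2 * √π * (t - s) ^ ζ * ∫ r in (0:ℝ)..s, (t - r) ^ (α - ζ - 1) := by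
        rw [intervalIntegral.integral_const_mul]
    _ ≤ 2 * √π * (t - s) ^ ζ * (1 / (α - ζ)) := by gcongr
    _ = _ := by ring
end
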